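/- arXiv:2401.05100 — 8 statements merged into one kernel-verified Lean document; each statement's English description precedes it below -/
import Mathlib

section
/- Fix constants α > 0, β ≥ 0, ζ > 0, σ > 0 and set κ := 1 + 2αβ, τ := (1 + αβ)^{-1}. Assume f : ℝ^{n_w} → ℝ is differentiable and σ-strongly convex with ∇f(0) = 0, g : ℝ^{n_w} → ℝ^{n_μ} is differentiable with each component g_i convex and g(0) ≤ 0 componentwise, and h(w;x) := Cw + Dx with C ∈ ℝ^{n_λ×n_w}, D ∈ ℝ^{n_λ×n}. Then for all w ∈ ℝ^{n_w}, x ∈ ℝ^n, λ ∈ ℝ^{n_λ} and μ ∈ ℝ^{n_μ} with μ ≥ 0 componentwise, defining the controller vector field ẇ := −ζ(∇f(w) + ∇g(w)μ + τκCᵀ(λ + β(Cw + Dx))), μ̇ := ζ[g(w)]_μ^+, λ̇ := ζτ(−αλ + Cw + Dx), one has ⟨w, ẇ⟩ + ⟨μ, μ̇⟩ + ⟨λ, λ̇⟩ ≤ ζ [w; x]ᵀ H^C_c [w; x], where H^C_c := [[−σI − βCᵀC, −βCᵀD], [−βDᵀC, (τ/(4α))DᵀD]]. -/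
open Matrix

local notation "⟪" x ", " y "⟫" => @inner ℝ _ _ x y

noncomputable def mv {α β : Type*} [Fintype β] (M : Matrix α β ℝ) (v : EuclideanSpace ℝ β) :
    EuclideanSpace ℝ α := WithLp.toLp 2 (M.mulVec v)

/-- The operator `[a]_b^+`. -/
noncomputable def pplus {p : ℕ} (a b : Fin p → ℝ) : Fin p → ℝ :=
  fun i => if 0 < b i then a i else max 0 (a i)

theorem aux_grad {E : Type*} [NormedAddCommGroup E] [InnerProductSpace ℝ E] [CompleteSpace E]
    (φ : E → ℝ) (φ' w v : E) (hd : HasGradientAt φ φ' w) (hc : ConvexOn ℝ Set.univ φ) :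
    φ w + ⟪φ', v - w⟫ ≤ φ v := by
  have hl : HasDerivAt (fun t : ℝ => w + t • (v - w)) (v - w) 0 := by
    simpa using ((hasDerivAt_id (0:ℝ)).smul_const (v - w)).const_add w
  have h1 : HasDerivAt (fun t : ℝ => φ (w + t • (v - w))) ⟪φ', v - w⟫ 0 := by
    have hF : HasFDerivAt φ (InnerProductSpace.toDual ℝ E φ') (w + (0:ℝ) • (v - w)) := by
      simpa using hd.hasFDerivAt
    have := hF.comp_hasDerivAt (0:ℝ) hl
    rw [InnerProductSpace.toDual_apply_apply] at this
    exact this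
  have h2 : ConvexOn ℝ Set.univ (fun t : ℝ => φ (w + t • (v - w))) := by
    have := hc.comp_affineMap (AffineMap.lineMap w v : ℝ →ᵃ[ℝ] E)
    refine ⟨convex_univ, ?_⟩
    intro x _ y _ a b ha hb hab
    have h := this.2 (Set.mem_univ x) (Set.mem_univ y) ha hb hab
    simpa [AffineMap.lineMap_apply, add_comm] using h
  have h3 := h2.le_slope_of_hasDerivAt (Set.mem_univ (0:ℝ)) (Set.mem_univ (1:ℝ)) one_pos h1
  simp [slope_def_field] at h3
  linarith

theorem aux_alg {E : Type*} [NormedAddCommGroup E] [InnerProductSpace ℝ E]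
    (α β τ : ℝ) (hα : 0 < α) (hβ : 0 ≤ β) (hτ : τ = (1 + α * β)⁻¹) (a d l : E) :
    -(τ * (1 + 2 * α * β)) * ⟪a, l + β • (a + d)⟫ + τ * ⟪l, (-α) • l + a + d⟫ ≤
      -β * ⟪a, a⟫ - 2 * β * ⟪a, d⟫ + τ / (4 * α) * ⟪d, d⟫ := by
  have hp : 0 < 1 + α * β := by positivity
  have ht : 0 < τ := by rw [hτ]; positivity
  have h1 : τ * (1 + α * β) = 1 := by rw [hτ]; field_simp
  have h : 0 ≤ τ * α * ⟪β • a + l - (1 / (2 * α)) • d, β • a + l - (1 / (2 * α)) • d⟫ :=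
    mul_nonneg (by positivity) real_inner_self_nonneg
  simp only [inner_add_left, inner_add_right, inner_sub_left, inner_sub_right,
    real_inner_smul_left, real_inner_smul_right] at h ⊢
  have c1 : ⟪l, a⟫ = ⟪a, l⟫ := real_inner_comm _ _
  have c2 : ⟪d, a⟫ = ⟪a, d⟫ := real_inner_comm _ _
  have c3 : ⟪d, l⟫ = ⟪l, d⟫ := real_inner_comm _ _
  rw [c1, c2, c3] at h
  rw [c1]
  clear c1 c2 c3
  generalize @inner ℝ E _ a a = aa at *
  generalize @inner ℝ E _ d d = dd at *
  generalize @inner ℝ E _ l l = ll at *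
  generalize @inner ℝ E _ a l = al at *
  generalize @inner ℝ E _ a d = ad at *
  generalize @inner ℝ E _ l d = ld at *
  rw [← sub_nonneg]
  refine h.trans_eq ?_
  have e : -β * aa - 2 * β * ad = τ * (1 + α * β) * (-β * aa - 2 * β * ad) := by
    rw [h1, one_mul]
  rw [e]
  field_simp
  ring

theorem aux_mv {m k : ℕ} (M : Matrix (Fin m) (Fin k) ℝ) (w : EuclideanSpace ℝ (Fin k))
    (y : EuclideanSpace ℝ (Fin m)) : ⟪w, mv Mᵀ y⟫ = ⟪mv M w, y⟫ := by
  simp only [mv, EuclideanSpace.inner_eq_star_dotProduct, star_trivial]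
  rw [Matrix.mulVec_transpose, ← Matrix.dotProduct_mulVec]

theorem aux_dot {m k l : ℕ} (M : Matrix (Fin m) (Fin k) ℝ) (N : Matrix (Fin m) (Fin l) ℝ)
    (w : EuclideanSpace ℝ (Fin k)) (x : EuclideanSpace ℝ (Fin l)) :
    (w : Fin k → ℝ) ⬝ᵥ ((Mᵀ * N).mulVec x) = ⟪mv M w, mv N x⟫ := by
  rw [← aux_mv]
  simp only [mv, EuclideanSpace.inner_eq_star_dotProduct, star_trivial]
  rw [← Matrix.mulVec_mulVec, dotProduct_comm]

/-- dissipation inequality for the continuous-time primal-dual gradient controller: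
`⟨w, ẇ⟩ + ⟨μ, μ̇⟩ + ⟨λ, λ̇⟩ ≤ ζ [w; x]ᵀ H^C_c [w; x]`. -/
theorem iMPC_controller_dissipativity
    (nw n nμ nl : ℕ) (α β ζ σ κ τ : ℝ)
    (hα : 0 < α) (hβ : 0 ≤ β) (hζ : 0 < ζ) (hσ : 0 < σ)
    (hκ : κ = 1 + 2 * α * β) (hτ : τ = (1 + α * β)⁻¹)
    (f : EuclideanSpace ℝ (Fin nw) → ℝ)
    (f' : EuclideanSpace ℝ (Fin nw) → EuclideanSpace ℝ (Fin nw))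
    (hfdiff : ∀ v, HasGradientAt f (f' v) v)
    (hfsc : ConvexOn ℝ Set.univ (fun v => f v - σ / 2 * ‖v‖ ^ 2))
    (hf0 : f' 0 = 0)
    (g : EuclideanSpace ℝ (Fin nw) → Fin nμ → ℝ)
    (g' : EuclideanSpace ℝ (Fin nw) → Fin nμ → EuclideanSpace ℝ (Fin nw))
    (hgdiff : ∀ v i, HasGradientAt (fun u => g u i) (g' v i) v)
    (hgconv : ∀ i, ConvexOn ℝ Set.univ fun v => g v i)
    (hg0 : ∀ i, g 0 i ≤ 0)
    (C : Matrix (Fin nl) (Fin nw) ℝ) (D : Matrix (Fin nl) (Fin n) ℝ) :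
    ∀ (w : EuclideanSpace ℝ (Fin nw)) (x : EuclideanSpace ℝ (Fin n))
      (lam : EuclideanSpace ℝ (Fin nl)) (μ : EuclideanSpace ℝ (Fin nμ)),
      (∀ i, 0 ≤ μ i) →
      let wdot : EuclideanSpace ℝ (Fin nw) :=
        (-ζ) • (f' w + (∑ i, μ i • g' w i) +
          (τ * κ) • mv Cᵀ (lam + β • (mv C w + mv D x)));
      let μdot : EuclideanSpace ℝ (Fin nμ) := ζ • (WithLp.toLp 2 (pplus (g w) μ) : EuclideanSpace ℝ (Fin nμ));
      let lamdot : EuclideanSpace ℝ (Fin nl) := (ζ * τ) • ((-α) • lam + mv C w + mv D x);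
      let HCc : Matrix (Fin nw ⊕ Fin n) (Fin nw ⊕ Fin n) ℝ :=
        Matrix.fromBlocks (-(σ • (1 : Matrix (Fin nw) (Fin nw) ℝ)) - β • (Cᵀ * C))
          (-(β • (Cᵀ * D))) (-(β • (Dᵀ * C))) ((τ / (4 * α)) • (Dᵀ * D));
      ⟪w, wdot⟫ + ⟪μ, μdot⟫ + ⟪lam, lamdot⟫ ≤
        ζ * (Sum.elim w x ⬝ᵥ HCc.mulVec (Sum.elim w x)) := by
  intro w x lam μ hμ wdot μdot lamdot HCc
  have hF : σ * ⟪w, w⟫ ≤ ⟪w, f' w⟫ := by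
    have hd : ∀ v, HasGradientAt (fun v => f v - σ / 2 * ‖v‖ ^ 2) (f' v - σ • v) v := by
      intro v
      rw [hasGradientAt_iff_hasFDerivAt]
      have h1 := (hfdiff v).hasFDerivAt
      have h2 := ((hasStrictFDerivAt_norm_sq v).hasFDerivAt).const_mul (σ / 2)
      refine (h1.sub h2).congr_fderiv ?_
      ext u
      simp [inner_sub_left, real_inner_smul_left]
      ring
    have h1 := aux_grad _ _ w 0 (hd w) hfsc
    have h2 := aux_grad _ _ 0 w (hd 0) hfsc
    simp only [hf0, inner_sub_left, inner_sub_right, real_inner_smul_left, smul_zero,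
      inner_zero_left, sub_zero, zero_sub, inner_neg_right, norm_zero] at h1 h2
    rw [real_inner_comm (f' w) w] at *
    linarith
  have hG : -⟪w, ∑ i, μ i • g' w i⟫ + ⟪μ, (WithLp.toLp 2 (pplus (g w) μ) : EuclideanSpace ℝ (Fin nμ))⟫ ≤ 0 := by
    rw [inner_sum, PiLp.inner_apply, ← Finset.sum_neg_distrib, ← Finset.sum_add_distrib]
    refine Finset.sum_nonpos fun i _ => ?_
    have h1 := aux_grad _ _ w 0 (hgdiff w i) (hgconv i)
    have h0 := hg0 i
    simp only [zero_sub, inner_neg_right] at h1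
    have h2 : μ i * pplus (g w) μ i = μ i * g w i := by
      unfold pplus
      split_ifs with h
      · rfl
      · have : μ i = 0 := le_antisymm (not_lt.mp h) (hμ i)
        simp [this]
    have h3 : ⟪μ i, pplus (g w) μ i⟫ = μ i * pplus (g w) μ i := by
      simp [mul_comm]
    rw [real_inner_smul_right]
    have h4 := real_inner_comm w (g' w i)
    have h5 := mul_nonneg (hμ i) (show 0 ≤ ⟪w, g' w i⟫ - g w i by linarith)
    change _ + ⟪μ i, pplus (g w) μ i⟫ ≤ 0
    rw [h3, h2]
    linarith
  have hA := aux_alg α β τ hα hβ hτ (mv C w) (mv D x) lam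
  have hR : Sum.elim w x ⬝ᵥ HCc.mulVec (Sum.elim w x) =
      -σ * ⟪w, w⟫ + (-β * ⟪mv C w, mv C w⟫ - 2 * β * ⟪mv C w, mv D x⟫
        + τ / (4 * α) * ⟪mv D x, mv D x⟫) := by
    have hw : (w : Fin nw → ℝ) ⬝ᵥ (w : Fin nw → ℝ) = ⟪w, w⟫ := by
      simp only [EuclideanSpace.inner_eq_star_dotProduct, star_trivial]
    simp only [HCc, Matrix.fromBlocks_mulVec, sumElim_dotProduct_sumElim,
      Sum.elim_comp_inl, Sum.elim_comp_inr, Matrix.sub_mulVec, Matrix.neg_mulVec,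
      Matrix.smul_mulVec, Matrix.one_mulVec, dotProduct_add, dotProduct_sub, dotProduct_neg,
      dotProduct_smul, aux_dot, hw, smul_eq_mul]
    rw [real_inner_comm (mv C w) (mv D x)]
    ring
  rw [hR]
  simp only [wdot, μdot, lamdot]
  rw [real_inner_smul_right, real_inner_smul_right, real_inner_smul_right, inner_add_right (x := w),
    inner_add_right (x := w), real_inner_smul_right w, aux_mv, hκ]
  have := mul_le_mul_of_nonneg_left (add_le_add (add_le_add hF hG) hA) hζ.le
  linarith
end

section
/- Fix constants α > 0, β ≥ 0, ζ > 0, σ > 0, δ > 0 and set κ := 1 + 2αβ, τ := (1 + αβ)^{-1}. Assume f : ℝ^{n_w} → ℝ is differentiable and σ-strongly convex with ∇f(0) = 0; g : ℝ^{n_w} → ℝ^{n_μ} is differentiable with each component g_i convex and g(0) < 0 componentwise; h(w;x) := Cw + Dx with C ∈ ℝ^{n_λ×n_w}, D ∈ ℝ^{n_λ×n}. Let A_c ∈ ℝ^{n×n}, B_c ∈ ℝ^{n×m}, and suppose there is a symmetric matrix H^P_c = [[Q, S], [Sᵀ, R]] with Q = Qᵀ ≺ 0 and R = Rᵀ such that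 ⟨x, A_c x + B_c u⟩ ≤ [x; u]ᵀ H^P_c [x; u] for all x ∈ ℝ^n, u ∈ ℝ^m. Let E ∈ ℝ^{m×n_w}, W := [[O, I], [E, O]] (so W[w; x] = [x; Ew]), H^C_c := [[−σI − βCᵀC, −βCᵀD], [−βDᵀC, (τ/(4α))DᵀD]], and suppose H_c := H^C_c + δWᵀH^P_cW ≺ 0. Define, for (w, μ, λ, x) with μ ≥ 0 componentwise, the Lyapunov derivative V̇ := ⟨w, ẇ⟩ + ⟨μ, μ̇⟩ + ⟨λ, λ̇⟩ + δζ⟨x, A_c x + B_c E w⟩, where ẇ := −ζ(∇f(w) + ∇g(w)μ + τκCᵀ(λ + β(Cw + Dx))), μ̇ := ζ[g(w)]_μ^+, λ̇ := ζτ(−αλ + Cw + Dx). Then V̇ ≤ 0, and V̇ = 0 if and only if (w, μ, λ, x) = (0, 0, 0, 0). -/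
open Matrix

local notation "⟪" x ", " y "⟫" => @inner ℝ _ _ x y

theorem grad_ineq {k : ℕ} (F : EuclideanSpace ℝ (Fin k) → ℝ) (G u v : EuclideanSpace ℝ (Fin k))
    (hF : ConvexOn ℝ Set.univ F) (hG : HasGradientAt F G v) :
    F v + inner ℝ G (u - v) ≤ F u := by
  have hc : ConvexOn ℝ Set.univ (F ∘ AffineMap.lineMap (k := ℝ) v u) := by
    simpa using hF.comp_affineMap (AffineMap.lineMap (k := ℝ) v u)
  have hd : HasDerivAt (F ∘ AffineMap.lineMap (k := ℝ) v u) (inner ℝ G (u - v)) 0 := by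
    have h1 : HasDerivAt (AffineMap.lineMap (k := ℝ) v u) (u - v) (0 : ℝ) :=
      AffineMap.hasDerivAt_lineMap
    have h2 := hG.hasFDerivAt
    rw [← AffineMap.lineMap_apply_zero (k := ℝ) v u] at h2
    simpa using h2.comp_hasDerivAt (0 : ℝ) h1
  have := hc.le_slope_of_hasDerivAt (Set.mem_univ 0) (Set.mem_univ 1) zero_lt_one hd
  simp [slope] at this
  linarith

theorem strong_ineq {k : ℕ} (σ : ℝ) (f : EuclideanSpace ℝ (Fin k) → ℝ)
    (f' : EuclideanSpace ℝ (Fin k) → EuclideanSpace ℝ (Fin k))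
    (hfdiff : ∀ v, HasGradientAt f (f' v) v)
    (hfsc : ConvexOn ℝ Set.univ (fun v => f v - σ / 2 * ‖v‖ ^ 2))
    (hf0 : f' 0 = 0) (w : EuclideanSpace ℝ (Fin k)) :
    σ * ‖w‖ ^ 2 ≤ inner ℝ w (f' w) := by
  have hg : ∀ v, HasGradientAt (fun v => f v - σ / 2 * ‖v‖ ^ 2) (f' v - σ • v) v := by
    intro v
    have h1 := (hfdiff v).hasFDerivAt
    have h2 := (hasStrictFDerivAt_norm_sq v).hasFDerivAt.const_mul (σ / 2)
    rw [hasGradientAt_iff_hasFDerivAt]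
    refine (h1.sub h2).congr_fderiv ?_
    ext1 y
    simp [inner_sub_left, inner_smul_left]
    ring
  have a := grad_ineq _ _ 0 w hfsc (hg w)
  have b := grad_ineq _ _ w 0 hfsc (hg 0)
  simp [hf0, inner_sub_left, inner_smul_left, real_inner_self_eq_norm_sq] at a b
  rw [real_inner_comm]
  linarith

theorem inner_mv {a b : ℕ} (M : Matrix (Fin a) (Fin b) ℝ) (x : EuclideanSpace ℝ (Fin a))
    (y : EuclideanSpace ℝ (Fin b)) : inner ℝ y (mv Mᵀ x) = inner ℝ (mv M y) x := by
  simp only [mv, EuclideanSpace.inner_eq_star_dotProduct, star_trivial]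
  rw [Matrix.mulVec_transpose, ← Matrix.dotProduct_mulVec]

theorem dot_mv {a b c : ℕ} (M : Matrix (Fin a) (Fin b) ℝ) (N : Matrix (Fin a) (Fin c) ℝ)
    (x : EuclideanSpace ℝ (Fin b)) (y : EuclideanSpace ℝ (Fin c)) :
    (x.ofLp ⬝ᵥ (Mᵀ * N) *ᵥ y.ofLp) = inner ℝ (mv M x) (mv N y) := by
  rw [← inner_mv, EuclideanSpace.inner_eq_star_dotProduct]
  simp only [mv, star_trivial]
  rw [← Matrix.mulVec_mulVec, dotProduct_comm]

theorem quad_eq {l : ℕ} (α β τ κ : ℝ) (hα : 0 < α) (hβ : 0 ≤ β)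
    (hκ : κ = 1 + 2 * α * β) (hτ : τ = (1 + α * β)⁻¹)
    (p q z : EuclideanSpace ℝ (Fin l)) :
    -(τ * κ) * inner ℝ p (z + β • (p + q)) + τ * inner ℝ z ((-α) • z + p + q)
     = -(τ * α) * ‖z + β • p - (1 / (2 * α)) • q‖ ^ 2
       + (-β * inner ℝ p p - β * inner ℝ p q - β * inner ℝ q p + τ / (4 * α) * inner ℝ q q) := by
  have h1 : (1 + α * β) ≠ 0 := by positivity
  rw [← real_inner_self_eq_norm_sq]
  simp only [inner_add_left, inner_add_right, inner_sub_left, inner_sub_right,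
    real_inner_smul_left, real_inner_smul_right]
  rw [real_inner_comm p q, real_inner_comm p z, real_inner_comm q z, hκ, hτ]
  field_simp
  ring

/-- under QSR-dissipativity of the plant and `H_c ≺ 0`, the Lyapunov derivative
`V̇` of the continuous-time closed loop satisfies `V̇ ≤ 0`, with `V̇ = 0` iff
`(w, μ, λ, x) = (0, 0, 0, 0)`. -/
theorem iMPC_closed_loop_Lyapunov_decrease
    (nw n m nμ nl : ℕ) (α β ζ σ δ κ τ : ℝ)
    (hα : 0 < α) (hβ : 0 ≤ β) (hζ : 0 < ζ) (hσ : 0 < σ) (hδ : 0 < δ)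
    (hκ : κ = 1 + 2 * α * β) (hτ : τ = (1 + α * β)⁻¹)
    (f : EuclideanSpace ℝ (Fin nw) → ℝ)
    (f' : EuclideanSpace ℝ (Fin nw) → EuclideanSpace ℝ (Fin nw))
    (hfdiff : ∀ v, HasGradientAt f (f' v) v)
    (hfsc : ConvexOn ℝ Set.univ (fun v => f v - σ / 2 * ‖v‖ ^ 2))
    (hf0 : f' 0 = 0)
    (g : EuclideanSpace ℝ (Fin nw) → Fin nμ → ℝ)
    (g' : EuclideanSpace ℝ (Fin nw) → Fin nμ → EuclideanSpace ℝ (Fin nw))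
    (hgdiff : ∀ v i, HasGradientAt (fun u => g u i) (g' v i) v)
    (hgconv : ∀ i, ConvexOn ℝ Set.univ fun v => g v i)
    (hg0 : ∀ i, g 0 i < 0)
    (C : Matrix (Fin nl) (Fin nw) ℝ) (D : Matrix (Fin nl) (Fin n) ℝ)
    (Ac : Matrix (Fin n) (Fin n) ℝ) (Bc : Matrix (Fin n) (Fin m) ℝ)
    (Q : Matrix (Fin n) (Fin n) ℝ) (S : Matrix (Fin n) (Fin m) ℝ)
    (R : Matrix (Fin m) (Fin m) ℝ)
    (hQsym : Q.IsSymm) (hQneg : (-Q).PosDef) (hRsym : R.IsSymm)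
    (hplant : ∀ (x : EuclideanSpace ℝ (Fin n)) (u : EuclideanSpace ℝ (Fin m)),
      ⟪x, mv Ac x + mv Bc u⟫ ≤
        Sum.elim x u ⬝ᵥ (Matrix.fromBlocks Q S Sᵀ R).mulVec (Sum.elim x u))
    (E : Matrix (Fin m) (Fin nw) ℝ)
    (W : Matrix (Fin n ⊕ Fin m) (Fin nw ⊕ Fin n) ℝ)
    (hW : W = Matrix.fromBlocks 0 1 E 0)
    (HCc : Matrix (Fin nw ⊕ Fin n) (Fin nw ⊕ Fin n) ℝ)
    (hHCc : HCc = Matrix.fromBlocks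
      (-(σ • (1 : Matrix (Fin nw) (Fin nw) ℝ)) - β • (Cᵀ * C))
      (-(β • (Cᵀ * D))) (-(β • (Dᵀ * C))) ((τ / (4 * α)) • (Dᵀ * D)))
    (hHc : (-(HCc + δ • (Wᵀ * Matrix.fromBlocks Q S Sᵀ R * W))).PosDef) :
    ∀ (w : EuclideanSpace ℝ (Fin nw)) (μ : EuclideanSpace ℝ (Fin nμ))
      (lam : EuclideanSpace ℝ (Fin nl)) (x : EuclideanSpace ℝ (Fin n)),
      (∀ i, 0 ≤ μ i) →
      let wdot : EuclideanSpace ℝ (Fin nw) :=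
        (-ζ) • (f' w + (∑ i, μ i • g' w i) +
          (τ * κ) • mv Cᵀ (lam + β • (mv C w + mv D x)));
      let μdot : EuclideanSpace ℝ (Fin nμ) := ζ • (WithLp.toLp 2 (pplus (g w) μ) : EuclideanSpace ℝ (Fin nμ));
      let lamdot : EuclideanSpace ℝ (Fin nl) := (ζ * τ) • ((-α) • lam + mv C w + mv D x);
      let Vdot : ℝ := ⟪w, wdot⟫ + ⟪μ, μdot⟫ + ⟪lam, lamdot⟫ +
        δ * ζ * ⟪x, mv Ac x + mv Bc (mv E w)⟫;
      Vdot ≤ 0 ∧ (Vdot = 0 ↔ w = 0 ∧ μ = 0 ∧ lam = 0 ∧ x = 0) := by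
  intro w μ lam x hμ wdot μdot lamdot Vdot
  have hf := strong_ineq σ f f' hfdiff hfsc hf0 w
  have hτ0 : 0 < τ := by rw [hτ]; positivity
  have hgi : ∀ i, μ i * (g w i - inner ℝ w (g' w i)) ≤ μ i * g 0 i := by
    intro i
    have := grad_ineq (fun v => g v i) _ 0 w (hgconv i) (hgdiff w i)
    simp at this
    apply mul_le_mul_of_nonneg_left _ (hμ i)
    rw [real_inner_comm]
    linarith
  have hgs := Finset.sum_le_sum (fun i (_ : i ∈ Finset.univ) => hgi i)
  have hneg : ∀ i ∈ Finset.univ, μ i * g 0 i ≤ 0 := fun i _ =>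
    mul_nonpos_of_nonneg_of_nonpos (hμ i) (hg0 i).le
  have hμd : inner ℝ μ μdot = ζ * ∑ i, μ i * g w i := by
    simp only [μdot, real_inner_smul_right]
    congr 1
    simp only [PiLp.inner_apply]
    apply Finset.sum_congr rfl
    intro i _
    rcases (hμ i).lt_or_eq with h | h
    · simp [pplus, h, mul_comm]
    · simp [← h]
  have hq := quad_eq α β τ κ hα hβ hκ hτ (mv C w) (mv D x) lam
  have hpl := hplant x (mv E w)
  set P := Matrix.fromBlocks Q S Sᵀ R with hP
  set z : Fin nw ⊕ Fin n → ℝ := Sum.elim w x with hz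
  have hWz : W *ᵥ z = Sum.elim x (mv E w) := by
    rw [hW, hz, Matrix.fromBlocks_mulVec]
    simp [mv, Function.comp_def]
  have hH : z ⬝ᵥ (HCc + δ • (Wᵀ * P * W)) *ᵥ z =
      -σ * ‖w‖ ^ 2 + (-β * inner ℝ (mv C w) (mv C w) - β * inner ℝ (mv C w) (mv D x)
        - β * inner ℝ (mv D x) (mv C w) + τ / (4 * α) * inner ℝ (mv D x) (mv D x))
      + δ * (Sum.elim x (mv E w) ⬝ᵥ P *ᵥ Sum.elim x (mv E w)) := by
    rw [Matrix.add_mulVec, dotProduct_add, Matrix.smul_mulVec, dotProduct_smul]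
    have e1 : z ⬝ᵥ (Wᵀ * P * W) *ᵥ z = Sum.elim x (mv E w) ⬝ᵥ P *ᵥ Sum.elim x (mv E w) := by
      rw [← Matrix.mulVec_mulVec, hWz, ← Matrix.mulVec_mulVec, Matrix.mulVec_transpose,
        dotProduct_comm, ← Matrix.dotProduct_mulVec, hWz, dotProduct_comm]
    have e2 : (w.ofLp ⬝ᵥ w.ofLp) = ‖w‖ ^ 2 := by
      rw [← real_inner_self_eq_norm_sq, EuclideanSpace.inner_eq_star_dotProduct]
      simp
    rw [e1, hHCc, hz, Matrix.fromBlocks_mulVec]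
    simp only [Sum.elim_comp_inl, Sum.elim_comp_inr, sumElim_dotProduct_sumElim,
      dotProduct_add, Matrix.sub_mulVec, Matrix.neg_mulVec, Matrix.smul_mulVec, dotProduct_sub,
      dotProduct_neg, dotProduct_smul, dot_mv, Matrix.one_mulVec, e2, smul_eq_mul]
    ring
  have hV : Vdot = ζ * (-inner ℝ w (f' w) + ∑ i, μ i * (g w i - inner ℝ w (g' w i))
      + (-(τ * κ) * inner ℝ (mv C w) (lam + β • (mv C w + mv D x))
        + τ * inner ℝ lam ((-α) • lam + mv C w + mv D x))
      + δ * inner ℝ x (mv Ac x + mv Bc (mv E w))) := by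
    simp only [Vdot, hμd, wdot, lamdot]
    rw [real_inner_smul_right, real_inner_smul_right, inner_add_right w, inner_add_right w,
      real_inner_smul_right, inner_mv, inner_sum]
    simp only [real_inner_smul_right, mul_sub, Finset.sum_sub_distrib]
    ring
  have hVle : Vdot ≤ ζ * (∑ i, μ i * g 0 i
      - (τ * α) * ‖lam + β • mv C w - (1 / (2 * α)) • mv D x‖ ^ 2
      + z ⬝ᵥ (HCc + δ • (Wᵀ * P * W)) *ᵥ z) := by
    rw [hV]
    apply mul_le_mul_of_nonneg_left _ hζ.le
    rw [hH, hq]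
    have := mul_le_mul_of_nonneg_left hpl hδ.le
    linarith
  have hs := Finset.sum_nonpos hneg
  have hsq : 0 ≤ (τ * α) * ‖lam + β • mv C w - (1 / (2 * α)) • mv D x‖ ^ 2 := by positivity
  have hHz : z ⬝ᵥ (HCc + δ • (Wᵀ * P * W)) *ᵥ z ≤ 0 := by
    have := hHc.posSemidef.dotProduct_mulVec_nonneg z
    rw [Matrix.neg_mulVec, dotProduct_neg] at this
    simpa using this
  have hle : Vdot ≤ 0 := hVle.trans (mul_nonpos_of_nonneg_of_nonpos hζ.le (by linarith))
  refine ⟨hle, ?_, ?_⟩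
  · intro h0
    rw [h0] at hVle
    have h1 := nonneg_of_mul_nonneg_right hVle hζ
    have hz0 : z = 0 := by
      by_contra hne
      have := hHc.dotProduct_mulVec_pos hne
      rw [Matrix.neg_mulVec, dotProduct_neg] at this
      simp only [star_trivial] at this
      linarith
    have hw0 : w = 0 := by
      ext i
      simpa [hz] using congrFun hz0 (Sum.inl i)
    have hx0 : x = 0 := by
      ext i
      simpa [hz] using congrFun hz0 (Sum.inr i)
    refine ⟨hw0, ?_, ?_, hx0⟩
    · have hs0 : ∑ i, μ i * g 0 i = 0 := by linarith
      rw [Finset.sum_eq_zero_iff_of_nonpos hneg] at hs0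
      ext i
      have := hs0 i (Finset.mem_univ i)
      simpa [(hg0 i).ne] using this
    · have h2 : (τ * α) * ‖lam + β • mv C w - (1 / (2 * α)) • mv D x‖ ^ 2 = 0 := by linarith
      have h3 : mv C w = 0 := by rw [hw0]; simp [mv]
      have h4 : mv D x = 0 := by rw [hx0]; simp [mv]
      simpa [h3, h4, hτ0.ne', hα.ne'] using h2
  · rintro ⟨rfl, rfl, rfl, rfl⟩
    simp [Vdot]
end

section
/- Fix constants α > 0, β ≥ 0, σ > 0, δ > 0 and set κ := 1 + 2αβ, τ := (1 + αβ)^{-1}. Let C ∈ ℝ^{n_λ×n_w}, D ∈ ℝ^{n_λ×n}, E ∈ ℝ^{m×n_w}, and let H^P_c be any symmetric (n+m)×(n+m) matrix. Define H^C_c := [[−σI − βCᵀC, −βCᵀD], [−βDᵀC, (τ/(4α))DᵀD]], W := [[O, I], [E, O]] (so W[w; x] = [x; Ew]), H_c := H^C_c + δWᵀH^P_cW, and H̄^C_c := [[−σI − τκβCᵀC, −(τκβ/2)CᵀD, −ταβCᵀ], [−(τκβ/2)DᵀC, O, (τ/2)Dᵀ], [−ταβC, (τ/2)D, −ταI]],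 W̄ := [W | O] (so W̄[w; x; λ] = [x; Ew]), H̄_c := H̄^C_c + δW̄ᵀH^P_cW̄. Then H_c ≺ 0 if and only if H̄_c ≺ 0. -/
open Matrix

lemma schur_aux {N L : Type*} [Fintype N] [Fintype L] [DecidableEq N] [DecidableEq L]
    (M : Matrix N N ℝ) (K : Matrix L N ℝ) (c : ℝ) (hc : 0 < c) :
    M.PosDef ↔ (Matrix.fromBlocks (M + c • (Kᵀ * K)) (c • Kᵀ) (c • K)
      (c • (1 : Matrix L L ℝ))).PosDef := by
  have key : ∀ (x : N → ℝ) (y : L → ℝ), star (Sum.elim x y) ⬝ᵥ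
      ((Matrix.fromBlocks (M + c • (Kᵀ * K)) (c • Kᵀ) (c • K)
      (c • (1 : Matrix L L ℝ))) *ᵥ (Sum.elim x y)) =
      star x ⬝ᵥ (M *ᵥ x) + c * ((K *ᵥ x + y) ⬝ᵥ (K *ᵥ x + y)) := by
    intro x y
    have h1 : x ⬝ᵥ (Kᵀ *ᵥ (K *ᵥ x)) = (K *ᵥ x) ⬝ᵥ (K *ᵥ x) := by
      rw [Matrix.dotProduct_mulVec, Matrix.vecMul_transpose]
    have h2 : x ⬝ᵥ (Kᵀ *ᵥ y) = (K *ᵥ x) ⬝ᵥ y := by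
      rw [Matrix.dotProduct_mulVec, Matrix.vecMul_transpose]
    have h3 : y ⬝ᵥ (K *ᵥ x) = (K *ᵥ x) ⬝ᵥ y := dotProduct_comm _ _
    simp only [star_trivial, Matrix.fromBlocks_mulVec, Sum.elim_comp_inl, Sum.elim_comp_inr,
      sumElim_dotProduct_sumElim, Matrix.add_mulVec, Matrix.smul_mulVec, dotProduct_add,
      add_dotProduct, dotProduct_smul, ← Matrix.mulVec_mulVec, Matrix.one_mulVec, smul_eq_mul,
      h1, h2, h3]
    ring
  constructor
  · intro h
    refine Matrix.PosDef.of_dotProduct_mulVec_pos ?_ ?_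
    · have := h.isHermitian
      rw [Matrix.IsHermitian] at this ⊢
      rw [Matrix.conjTranspose_eq_transpose_of_trivial] at this ⊢
      simp [Matrix.fromBlocks_transpose, this]
    · intro v hv
      obtain ⟨x, y, rfl⟩ : ∃ x y, v = Sum.elim x y :=
        ⟨v ∘ Sum.inl, v ∘ Sum.inr, (Sum.elim_comp_inl_inr v).symm⟩
      rw [key]
      have h0 : 0 ≤ (K *ᵥ x + y) ⬝ᵥ (K *ᵥ x + y) :=
        Finset.sum_nonneg fun i _ => mul_self_nonneg _
      by_cases hx : x = 0
      · subst hx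
        have hy : y ≠ 0 := by
          rintro rfl
          exact hv (by ext i; cases i <;> rfl)
        have : y ⬝ᵥ y ≠ 0 := fun h => hy (dotProduct_self_eq_zero.1 h)
        simp only [Matrix.mulVec_zero, zero_add, dotProduct_zero] at h0 ⊢
        exact mul_pos hc (lt_of_le_of_ne h0 this.symm)
      · have := h.dotProduct_mulVec_pos hx
        have := mul_nonneg hc.le h0
        linarith
  · intro h
    refine Matrix.PosDef.of_dotProduct_mulVec_pos ?_ ?_
    · have := (Matrix.isHermitian_fromBlocks_iff.1 h.isHermitian).1
      rw [Matrix.IsHermitian] at this ⊢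
      rw [Matrix.conjTranspose_eq_transpose_of_trivial] at this ⊢
      simpa using this
    · intro x hx
      have hne : Sum.elim x (-(K *ᵥ x)) ≠ 0 := by
        intro h0
        apply hx
        ext i
        exact congrFun h0 (Sum.inl i)
      have := h.dotProduct_mulVec_pos hne
      rw [key] at this
      simpa using this

/-- Schur-complement equivalence `H_c ≺ 0 ↔ H̄_c ≺ 0`. -/
theorem Hc_negdef_iff_Hbarc_negdef
    (nw n nl m : ℕ) (α β σ δ κ τ : ℝ)
    (hα : 0 < α) (hβ : 0 ≤ β) (hσ : 0 < σ) (hδ : 0 < δ)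
    (hκ : κ = 1 + 2 * α * β) (hτ : τ = (1 + α * β)⁻¹)
    (C : Matrix (Fin nl) (Fin nw) ℝ) (D : Matrix (Fin nl) (Fin n) ℝ)
    (E : Matrix (Fin m) (Fin nw) ℝ)
    (HPc : Matrix (Fin n ⊕ Fin m) (Fin n ⊕ Fin m) ℝ) (hHPc : HPc.IsSymm)
    (W : Matrix (Fin n ⊕ Fin m) (Fin nw ⊕ Fin n) ℝ)
    (hW : W = Matrix.fromBlocks 0 1 E 0)
    (HCc : Matrix (Fin nw ⊕ Fin n) (Fin nw ⊕ Fin n) ℝ)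
    (hHCc : HCc = Matrix.fromBlocks
      (-(σ • (1 : Matrix (Fin nw) (Fin nw) ℝ)) - β • (Cᵀ * C))
      (-(β • (Cᵀ * D))) (-(β • (Dᵀ * C))) ((τ / (4 * α)) • (Dᵀ * D)))
    (Hc : Matrix (Fin nw ⊕ Fin n) (Fin nw ⊕ Fin n) ℝ)
    (hHc : Hc = HCc + δ • (Wᵀ * HPc * W))
    (HbCc : Matrix ((Fin nw ⊕ Fin n) ⊕ Fin nl) ((Fin nw ⊕ Fin n) ⊕ Fin nl) ℝ)
    (hHbCc : HbCc = Matrix.fromBlocks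
      (Matrix.fromBlocks
        (-(σ • (1 : Matrix (Fin nw) (Fin nw) ℝ)) - (τ * κ * β) • (Cᵀ * C))
        (-((τ * κ * β / 2) • (Cᵀ * D)))
        (-((τ * κ * β / 2) • (Dᵀ * C))) 0)
      (Matrix.fromRows (-((τ * α * β) • Cᵀ)) ((τ / 2) • Dᵀ))
      (Matrix.fromCols (-((τ * α * β) • C)) ((τ / 2) • D))
      (-((τ * α) • (1 : Matrix (Fin nl) (Fin nl) ℝ))))
    (Wb : Matrix (Fin n ⊕ Fin m) ((Fin nw ⊕ Fin n) ⊕ Fin nl) ℝ)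
    (hWb : Wb = Matrix.fromCols W 0)
    (Hbc : Matrix ((Fin nw ⊕ Fin n) ⊕ Fin nl) ((Fin nw ⊕ Fin n) ⊕ Fin nl) ℝ)
    (hHbc : Hbc = HbCc + δ • (Wbᵀ * HPc * Wb)) :
    (-Hc).PosDef ↔ (-Hbc).PosDef := by
  have hp : 0 < 1 + α * β := by positivity
  have hτp : 0 < τ := by rw [hτ]; positivity
  have hτ1 : τ * (1 + α * β) = 1 := by rw [hτ]; field_simp
  have hα' := hα.ne'
  have hτ' := hτp.ne'
  rw [schur_aux (-Hc) (Matrix.fromCols (β • C) (-(1 / (2 * α)) • D)) (τ * α) (by positivity)]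
  suffices h : Matrix.fromBlocks (-Hc + (τ * α) •
      ((Matrix.fromCols (β • C) (-(1 / (2 * α)) • D))ᵀ *
        (Matrix.fromCols (β • C) (-(1 / (2 * α)) • D))))
      ((τ * α) • (Matrix.fromCols (β • C) (-(1 / (2 * α)) • D))ᵀ)
      ((τ * α) • (Matrix.fromCols (β • C) (-(1 / (2 * α)) • D)))
      ((τ * α) • (1 : Matrix (Fin nl) (Fin nl) ℝ)) = -Hbc by rw [h]
  have hWW : Wbᵀ * HPc * Wb = Matrix.fromBlocks (Wᵀ * HPc * W) 0 0 0 := by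
    rw [hWb, Matrix.transpose_fromCols, Matrix.fromRows_mul, Matrix.fromRows_mul_fromCols]
    simp
  have e1 : -β = -(τ * κ * β) + τ * α * β * β := by
    rw [hκ]; linear_combination β * hτ1
  have e2 : β = τ * κ * β / 2 + τ * β / 2 := by
    rw [hκ]; linear_combination (-β) * hτ1
  rw [hHbc, hWW, hHbCc, hHc, hHCc]
  generalize Wᵀ * HPc * W = Z
  rw [Matrix.transpose_fromCols, Matrix.fromRows_mul_fromCols]
  ext (( i | i) | i) ((j | j) | j)
  · simp [Matrix.add_apply, Matrix.smul_apply]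
    linear_combination (-(Cᵀ * C) i j) * e1
  · simp
    field_simp
    linear_combination (2 * (Cᵀ * D) i j) * e2
  · simp
    ring
  · simp
    field_simp
    linear_combination (2 * (Dᵀ * C) i j) * e2
  · simp
    field_simp
    ring
  · simp
    field_simp
  · simp
    ring
  · simp
    field_simp
  · simp
end

section
/- Fix constants α > 0, β ≥ 0, ζ > 0, σ > 0, Δt > 0 and set κ := 1 + 2αβ, τ := (1 + αβ)^{-1}. Assume f : ℝ^{n_w} → ℝ is differentiable and σ-strongly convex with ∇f(0) = 0; g : ℝ^{n_w} → ℝ^{n_μ} is differentiable with each component g_i convex and g(0) ≤ 0 componentwise; C ∈ ℝ^{n_λ×n_w}, D ∈ ℝ^{n_λ×n}. For w, x, λ and μ ≥ 0 componentwise, γ ∈ (0,1], let η̄ be the step-size base vector, set z := [w; x; λ], φ := ∇f(w) + τκCᵀ(λ + β(Cw + Dx)), and define the discrete updates Δw := −ζΔt(φ + γ∇g(w)(η̄∘μ)), Δμ := ζΔt γ η̄∘[g(w)]_μ^+, Δλ := ζτΔt(−αλ + Cw + Dx). Then with b^I := ⟨η̄∘μ, [g(w)]_μ^+ − ∇g(w)ᵀw⟩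 and H̄^C_c := [[−σI − τκβCᵀC, −(τκβ/2)CᵀD, −ταβCᵀ], [−(τκβ/2)DᵀC, O, (τ/2)Dᵀ], [−ταβC, (τ/2)D, −ταI]], one has ⟨w, Δw⟩ + ⟨μ, Δμ⟩ + ⟨λ, Δλ⟩ ≤ ζΔt (zᵀ H̄^C_c z + γ b^I). -/
open Matrix

local notation "⟪" x ", " y "⟫" => @inner ℝ _ _ x y

/-- The step-size base vector `η̄` for coefficient `c = ζΔt`, constraint value `gw = g(w)` and
dual variable `μ`. -/
noncomputable def etaBar {p : ℕ} (c : ℝ) (gw μ : Fin p → ℝ) : Fin p → ℝ :=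
  fun i => if 0 ≤ μ i + c * pplus gw μ i then 1 else -(μ i) / (c * pplus gw μ i)

theorem aux_strong {nw : ℕ} {σ : ℝ} {f : EuclideanSpace ℝ (Fin nw) → ℝ}
    {f' : EuclideanSpace ℝ (Fin nw) → EuclideanSpace ℝ (Fin nw)}
    (hfdiff : ∀ v, HasGradientAt f (f' v) v)
    (hfsc : ConvexOn ℝ Set.univ (fun v => f v - σ / 2 * ‖v‖ ^ 2))
    (hf0 : f' 0 = 0) (w : EuclideanSpace ℝ (Fin nw)) :
    σ * inner ℝ w w ≤ inner ℝ w (f' w) := by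
  have hline : ∀ t : ℝ, HasDerivAt (fun t : ℝ => t • w) w t := by
    intro t
    simpa using (hasDerivAt_id t).smul_const w
  have hd : ∀ t : ℝ, HasDerivAt (fun t : ℝ => f (t • w) - σ / 2 * ‖t • w‖ ^ 2)
      (inner ℝ (f' (t • w)) w - σ / 2 * (2 * inner ℝ (t • w) w)) t := by
    intro t
    have h1 := (hfdiff (t • w)).hasFDerivAt.comp_hasDerivAt t (hline t)
    have h2 := ((hline t).norm_sq).const_mul (σ / 2)
    have h3 := h1.sub h2
    have h4 := h3.congr_deriv (g' := inner ℝ (f' (t • w)) w - σ / 2 * (2 * inner ℝ (t • w) w)) (by simp)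
    exact h4
  have hc : ConvexOn ℝ Set.univ (fun t : ℝ => f (t • w) - σ / 2 * ‖t • w‖ ^ 2) := by
    have := hfsc.comp_linearMap (LinearMap.toSpanSingleton ℝ _ w)
    simpa [Function.comp_def] using this
  have h0 := hc.le_slope_of_hasDerivAt (Set.mem_univ 0) (Set.mem_univ 1) one_pos (hd 0)
  have h1 := hc.slope_le_of_hasDerivAt (Set.mem_univ 0) (Set.mem_univ 1) one_pos (hd 1)
  have h := h0.trans h1
  rw [one_smul, zero_smul, hf0, inner_zero_left, real_inner_comm] at h
  linarith

/-- first-order part of the discrete dissipation inequality: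
`⟨w, Δw⟩ + ⟨μ, Δμ⟩ + ⟨λ, Δλ⟩ ≤ ζΔt (zᵀ H̄^C_c z + γ b^I)`. -/
theorem discrete_first_order_dissipation
    (nw n nμ nl : ℕ) (α β ζ σ Δt γ κ τ : ℝ)
    (hα : 0 < α) (hβ : 0 ≤ β) (hζ : 0 < ζ) (hσ : 0 < σ) (hΔt : 0 < Δt)
    (hγ0 : 0 < γ) (hγ1 : γ ≤ 1)
    (hκ : κ = 1 + 2 * α * β) (hτ : τ = (1 + α * β)⁻¹)
    (f : EuclideanSpace ℝ (Fin nw) → ℝ)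
    (f' : EuclideanSpace ℝ (Fin nw) → EuclideanSpace ℝ (Fin nw))
    (hfdiff : ∀ v, HasGradientAt f (f' v) v)
    (hfsc : ConvexOn ℝ Set.univ (fun v => f v - σ / 2 * ‖v‖ ^ 2))
    (hf0 : f' 0 = 0)
    (g : EuclideanSpace ℝ (Fin nw) → Fin nμ → ℝ)
    (g' : EuclideanSpace ℝ (Fin nw) → Fin nμ → EuclideanSpace ℝ (Fin nw))
    (hgdiff : ∀ v i, HasGradientAt (fun u => g u i) (g' v i) v)
    (hgconv : ∀ i, ConvexOn ℝ Set.univ fun v => g v i)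
    (hg0 : ∀ i, g 0 i ≤ 0)
    (C : Matrix (Fin nl) (Fin nw) ℝ) (D : Matrix (Fin nl) (Fin n) ℝ)
    (HbCc : Matrix ((Fin nw ⊕ Fin n) ⊕ Fin nl) ((Fin nw ⊕ Fin n) ⊕ Fin nl) ℝ)
    (hHbCc : HbCc = Matrix.fromBlocks
      (Matrix.fromBlocks
        (-(σ • (1 : Matrix (Fin nw) (Fin nw) ℝ)) - (τ * κ * β) • (Cᵀ * C))
        (-((τ * κ * β / 2) • (Cᵀ * D)))
        (-((τ * κ * β / 2) • (Dᵀ * C))) 0)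
      (Matrix.fromRows (-((τ * α * β) • Cᵀ)) ((τ / 2) • Dᵀ))
      (Matrix.fromCols (-((τ * α * β) • C)) ((τ / 2) • D))
      (-((τ * α) • (1 : Matrix (Fin nl) (Fin nl) ℝ)))) :
    ∀ (w : EuclideanSpace ℝ (Fin nw)) (x : EuclideanSpace ℝ (Fin n))
      (lam : EuclideanSpace ℝ (Fin nl)) (μ : EuclideanSpace ℝ (Fin nμ)),
      (∀ i, 0 ≤ μ i) →
      let ηb : Fin nμ → ℝ := etaBar (ζ * Δt) (g w) μ;
      let φ : EuclideanSpace ℝ (Fin nw) :=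
        f' w + (τ * κ) • mv Cᵀ (lam + β • (mv C w + mv D x));
      let Δw : EuclideanSpace ℝ (Fin nw) :=
        (-(ζ * Δt)) • (φ + γ • ∑ i, (ηb i * μ i) • g' w i);
      let Δμ : EuclideanSpace ℝ (Fin nμ) :=
        (ζ * Δt * γ) • (WithLp.toLp 2 (fun i => ηb i * pplus (g w) μ i) : EuclideanSpace ℝ (Fin nμ));
      let Δlam : EuclideanSpace ℝ (Fin nl) :=
        (ζ * τ * Δt) • ((-α) • lam + mv C w + mv D x);
      let bI : ℝ := ∑ i, (ηb i * μ i) * (pplus (g w) μ i - ⟪g' w i, w⟫);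
      ⟪w, Δw⟫ + ⟪μ, Δμ⟫ + ⟪lam, Δlam⟫ ≤
        ζ * Δt * (Sum.elim (Sum.elim w x) lam ⬝ᵥ
          HbCc.mulVec (Sum.elim (Sum.elim w x) lam) + γ * bI) := by
  intro w x lam μ hμ ηb φ Δw Δμ Δlam bI
  have hs := aux_strong hfdiff hfsc hf0 w
  have hT : ∀ v : EuclideanSpace ℝ (Fin nl), inner ℝ w (mv Cᵀ v) = inner ℝ (mv C w) v := by
    intro v
    simp only [EuclideanSpace.inner_eq_star_dotProduct, mv, star_trivial]
    rw [dotProduct_comm, Matrix.dotProduct_mulVec, Matrix.vecMul_transpose, dotProduct_comm]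
  have hH : Sum.elim (Sum.elim w x) lam ⬝ᵥ HbCc.mulVec (Sum.elim (Sum.elim w x) lam)
      = -σ * inner ℝ w w - τ * κ * β * inner ℝ (mv C w) (mv C w)
        - τ * κ * β * inner ℝ (mv C w) (mv D x) - 2 * (τ * α * β) * inner ℝ (mv C w) lam
        + τ * inner ℝ lam (mv D x) - τ * α * inner ℝ lam lam := by
    have e1 : ∀ {p : ℕ} (A : Matrix (Fin nl) (Fin p) ℝ) (u : Fin p → ℝ) (v : Fin nl → ℝ),
        u ⬝ᵥ Aᵀ *ᵥ v = (A *ᵥ u) ⬝ᵥ v := by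
      intro p A u v
      rw [Matrix.dotProduct_mulVec, Matrix.vecMul_transpose]
    subst hHbCc
    simp only [EuclideanSpace.inner_eq_star_dotProduct, mv, star_trivial]
    simp only [Matrix.fromBlocks_mulVec, Matrix.fromRows_mulVec, Matrix.fromCols_mulVec_sumElim,
      sumElim_dotProduct_sumElim, Sum.elim_comp_inl, Sum.elim_comp_inr, dotProduct_add,
      Matrix.sub_mulVec, Matrix.neg_mulVec, Matrix.smul_mulVec, dotProduct_sub, dotProduct_neg,
      dotProduct_smul, ← Matrix.mulVec_mulVec, Matrix.one_mulVec, Matrix.zero_mulVec,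
      dotProduct_zero, smul_eq_mul, e1, ← Sum.elim_add_add]
    rw [dotProduct_comm (D *ᵥ x.ofLp) (C *ᵥ w.ofLp), dotProduct_comm lam.ofLp (C *ᵥ w.ofLp),
      dotProduct_comm lam.ofLp (D *ᵥ x.ofLp)]
    ring
  have hμe : inner ℝ μ Δμ = ζ * Δt * γ * ∑ i, (ηb i * μ i) * pplus (g w) μ i := by
    simp only [Δμ, inner_smul_right, PiLp.inner_apply]
    congr 1
    refine Finset.sum_congr rfl fun i _ => ?_
    simp
    ring
  have hb : bI = ∑ i, (ηb i * μ i) * pplus (g w) μ i - inner ℝ w (∑ i, (ηb i * μ i) • g' w i) := by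
    simp only [bI, inner_sum, inner_smul_right, mul_sub, Finset.sum_sub_distrib]
    simp only [real_inner_comm w]
  have hκτ : τ * κ - τ = 2 * (τ * α * β) := by rw [hκ]; ring
  rw [hH, hμe, hb]
  simp only [Δw, Δlam, φ, inner_smul_right, inner_add_right, hT]
  rw [real_inner_comm (mv C w) lam]
  have hp : 0 < ζ * Δt := mul_pos hζ hΔt
  have key := mul_le_mul_of_nonneg_left hs hp.le
  subst hκ
  linarith
end

section
/- Let ζ > 0, Δt > 0 and g : ℝ^{n_w} → ℝ^{n_μ} with g(0) < 0 componentwise. Let μ ∈ ℝ^{n_μ} with μ ≥ 0 componentwise and μ ≠ 0, and let η̄ be the step-size base vector evaluated at w = 0 (i.e., η̄_i := 1 if μ_i + ζΔt([g(0)]_μ^+)_i ≥ 0, and η̄_i := −μ_i/(ζΔt([g(0)]_μ^+)_i) otherwise). Then ⟨η̄∘μ, [g(0)]_μ^+⟩ < 0. -/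
open Matrix

local notation "⟪" x ", " y "⟫" => @inner ℝ _ _ x y

/-- for `g(0) < 0`, `μ ≥ 0`, `μ ≠ 0`, the step-size base vector at `w = 0`
satisfies `⟨η̄∘μ, [g(0)]_μ^+⟩ < 0`. -/
theorem etaBar_inner_neg
    (nw nμ : ℕ) (ζ Δt : ℝ) (hζ : 0 < ζ) (hΔt : 0 < Δt)
    (g : EuclideanSpace ℝ (Fin nw) → Fin nμ → ℝ)
    (hg0 : ∀ i, g 0 i < 0)
    (μ : EuclideanSpace ℝ (Fin nμ)) (hμ : ∀ i, 0 ≤ μ i) (hμ0 : μ ≠ 0) :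
    ∑ i, (etaBar (ζ * Δt) (g 0) μ i * μ i) * pplus (g 0) μ i < 0 := by
  have hc : 0 < ζ * Δt := mul_pos hζ hΔt
  have key : ∀ i, 0 < μ i →
      (etaBar (ζ * Δt) (g 0) μ i * μ i) * pplus (g 0) μ i < 0 := by
    intro i hi
    have hp : pplus (g 0) μ i = g 0 i := if_pos hi
    have he : 0 < etaBar (ζ * Δt) (g 0) μ i := by
      unfold etaBar
      rw [hp]
      split_ifs
      · exact one_pos
      · exact div_pos_of_neg_of_neg (neg_neg_of_pos hi) (mul_neg_of_pos_of_neg hc (hg0 i))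
    rw [hp]
    exact mul_neg_of_pos_of_neg (mul_pos he hi) (hg0 i)
  have hex : ∃ i, 0 < μ i := by
    by_contra hcon
    apply hμ0
    ext i
    exact le_antisymm (not_lt.mp fun h => hcon ⟨i, h⟩) (hμ i)
  obtain ⟨j, hj⟩ := hex
  apply Finset.sum_neg'
  · intro i _
    rcases (hμ i).eq_or_lt with h | h
    · rw [← h]; simp
    · exact (key i h).le
  · exact ⟨j, Finset.mem_univ j, key j hj⟩
end

section
/- Fix constants α > 0, β ≥ 0, ζ > 0, σ > 0, ρ ≥ σ, Δt > 0, δ > 0 and set κ := 1 + 2αβ, τ := (1 + αβ)^{-1}. Assume: f : ℝ^{n_w} → ℝ is differentiable, σ-strongly convex, ρ-smooth, with ∇f(0) = 0; g : ℝ^{n_w} → ℝ^{n_μ} is differentiable with each component g_i convex and g(0) < 0 componentwise; C ∈ ℝ^{n_λ×n_w}, D ∈ ℝ^{n_λ×n}, E ∈ ℝ^{m×n_w}; A_d ∈ ℝ^{n×n}, B_d ∈ ℝ^{n×m}, and there are a symmetric matrix H^P_d with negative definite upper-left n×n block and a positive semidefinite matrix P^P_d such that (1/2)‖A_d x + B_d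 u‖² − (1/2)‖x‖² ≤ Δt [x; u]ᵀ(H^P_d + Δt P^P_d)[x; u] for all x, u. Define H̄^C_c := [[−σI − τκβCᵀC, −(τκβ/2)CᵀD, −ταβCᵀ], [−(τκβ/2)DᵀC, O, (τ/2)Dᵀ], [−ταβC, (τ/2)D, −ταI]], X := τκ Cᵀ[βC βD I], P̄ := (ρ² + 2ρ‖X‖)I + XᵀX, P̄^C_d := (1/2)(P̄ + τ²[C D −αI]ᵀ[C D −αI]), W̄ := [[O, I, O], [E, O, O]] (so W̄[w; x; λ] = [x; Ew]), and suppose H̄_d := H̄^C_c + ζΔt P̄^C_d + δW̄ᵀ(H^P_d + Δt P^P_d)W̄ ≺ 0. Define V(w, μ, λ, x) := (1/2)(‖w‖² + ‖μ‖² + ‖λ‖²) + δζ(1/2)‖x‖², and for γ ∈ (0,1] the one-step closed-loop update: w⁺ := w − ζΔt(∇f(w) + γ∇g(w)(η̄∘μ) + τκCᵀ(λ + β(Cw + Dx))), μ⁺ := μ + ζΔt γ η̄∘[g(w)]_μ^+, λ⁺ := λ + ζτΔt(−αλ + Cw + Dx), x⁺ := A_d x + B_d E w, where η̄ is the step-size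 base vector. Then for every (w, μ, λ, x) with μ ≥ 0 componentwise: if (w, μ, λ, x) ≠ (0, 0, 0, 0), there exists γ̄ ∈ (0, 1] such that V(w⁺, μ⁺, λ⁺, x⁺) − V(w, μ, λ, x) < 0 for all γ ∈ (0, γ̄); and if (w, μ, λ, x) = (0, 0, 0, 0), then V(w⁺, μ⁺, λ⁺, x⁺) − V(w, μ, λ, x) = 0 for every γ ∈ (0, 1]. -/
open Matrix

local notation "⟪" x ", " y "⟫" => @inner ℝ _ _ x y

/-- Operator norm of a matrix, induced by the Euclidean norms. -/
noncomputable def opNorm {α β : Type*} [Fintype α] [Fintype β] [DecidableEq β]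
    (M : Matrix α β ℝ) : ℝ :=
  ‖LinearMap.toContinuousLinearMap (Matrix.toEuclideanLin M)‖


theorem aux_HbCc (nw n nl:ℕ) (C : Matrix (Fin nl) (Fin nw) ℝ) (D : Matrix (Fin nl) (Fin n) ℝ) (σ k a t b: ℝ) (w : Fin nw → ℝ) (x : Fin n → ℝ) (l : Fin nl → ℝ) :
  Sum.elim (Sum.elim w x) l ⬝ᵥ (Matrix.fromBlocks
      (Matrix.fromBlocks
        (-(σ • (1 : Matrix (Fin nw) (Fin nw) ℝ)) - (k) • (Cᵀ * C))
        (-((k / 2) • (Cᵀ * D)))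
        (-((k / 2) • (Dᵀ * C))) 0)
      (Matrix.fromRows (-((a) • Cᵀ)) ((t / 2) • Dᵀ))
      (Matrix.fromCols (-((a) • C)) ((t / 2) • D))
      (-((b) • (1 : Matrix (Fin nl) (Fin nl) ℝ)))) *ᵥ (Sum.elim (Sum.elim w x) l) =
   - σ * (w ⬝ᵥ w) - k * (C *ᵥ w ⬝ᵥ C *ᵥ w) - k * (C *ᵥ w ⬝ᵥ D *ᵥ x) - 2 * a * (C *ᵥ w ⬝ᵥ l) + t * (D *ᵥ x ⬝ᵥ l) - b * (l ⬝ᵥ l) := by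
  have h1 : ∀ v, w ⬝ᵥ Cᵀ *ᵥ v = C *ᵥ w ⬝ᵥ v := fun v => by rw [dotProduct_mulVec, vecMul_transpose]
  have h2 : ∀ v, x ⬝ᵥ Dᵀ *ᵥ v = D *ᵥ x ⬝ᵥ v := fun v => by rw [dotProduct_mulVec, vecMul_transpose]
  simp [fromBlocks_mulVec, fromRows_mulVec, fromCols_mulVec, Matrix.sub_mulVec, Matrix.neg_mulVec, Matrix.smul_mulVec, ← Matrix.mulVec_mulVec, h1, h2, Function.comp_def]
  rw [dotProduct_comm l, dotProduct_comm l, dotProduct_comm (D *ᵥ x) (C *ᵥ w)]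
  ring

theorem aux_mono {E : Type*} [NormedAddCommGroup E] [InnerProductSpace ℝ E] [CompleteSpace E] (f : E → ℝ) (f' : E → E) (σ : ℝ)
    (hfdiff : ∀ v, HasGradientAt f (f' v) v)
    (hfsc : ConvexOn ℝ Set.univ (fun v => f v - σ / 2 * ‖v‖ ^ 2)) (hf0 : f' 0 = 0) (w : E) : σ * ‖w‖^2 ≤ inner ℝ w (f' w) := by
  have hd : ∀ t : ℝ, HasDerivAt (fun t : ℝ => f (t • w) - σ / 2 * ‖t • w‖ ^ 2) (inner ℝ (f' (t • w)) w - σ / 2 * (2 * t * ‖w‖^2)) t := by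
    intro t
    have h1 : HasDerivAt (fun t : ℝ => t • w) w t := by
      simpa using (hasDerivAt_id t).smul_const w
    have h2 := (hfdiff (t • w)).hasFDerivAt.comp_hasDerivAt t h1
    refine HasDerivAt.sub (by simpa [Function.comp_def] using h2) ?_
    have h3 : HasDerivAt (fun t : ℝ => σ/2 * (t^2 * ‖w‖^2)) (σ/2 * (2 * t * ‖w‖^2)) t := by
      simpa using ((hasDerivAt_pow 2 t).mul_const (‖w‖^2)).const_mul (σ/2)
    have h4 : (fun t : ℝ => σ / 2 * ‖t • w‖ ^ 2) = (fun t : ℝ => σ/2 * (t^2 * ‖w‖^2)) := by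
      funext s
      simp [norm_smul, mul_pow]
    rw [h4]; exact h3
  have hc : ConvexOn ℝ Set.univ (fun t : ℝ => f (t • w) - σ / 2 * ‖t • w‖ ^ 2) := by
    have := hfsc.comp_linearMap (LinearMap.toSpanSingleton ℝ E w)
    simpa [Function.comp_def] using this
  have a := hc.le_slope_of_hasDerivAt (Set.mem_univ 0) (Set.mem_univ 1) one_pos (hd 0)
  have b := hc.slope_le_of_hasDerivAt (Set.mem_univ 0) (Set.mem_univ 1) one_pos (hd 1)
  have := a.trans b
  simp [hf0] at this
  rw [real_inner_comm]; linarith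

theorem aux_inner {ι : Type*} [Fintype ι] (a b : EuclideanSpace ℝ ι) :
    inner ℝ a b = a.ofLp ⬝ᵥ b.ofLp := by
  rw [EuclideanSpace.inner_eq_star_dotProduct, dotProduct_comm]; simp

theorem aux_normsq {ι : Type*} [Fintype ι] (a : EuclideanSpace ℝ ι) :
    ‖a‖ ^ 2 = a.ofLp ⬝ᵥ a.ofLp := by
  rw [← aux_inner, real_inner_self_eq_norm_sq]

theorem aux_gram {ι κ : Type*} [Fintype ι] [Fintype κ] (M : Matrix ι κ ℝ) (v : κ → ℝ) :
    v ⬝ᵥ (Mᵀ * M) *ᵥ v = M *ᵥ v ⬝ᵥ M *ᵥ v := by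
  rw [← Matrix.mulVec_mulVec, dotProduct_mulVec, vecMul_transpose]

theorem aux_opNorm {α β : Type*} [Fintype α] [Fintype β] [DecidableEq β]
    (M : Matrix α β ℝ) (v : EuclideanSpace ℝ β) : ‖mv M v‖ ≤ opNorm M * ‖v‖ :=
  (LinearMap.toContinuousLinearMap (Matrix.toEuclideanLin M)).le_opNorm v

theorem aux_adj {α β : Type*} [Fintype α] [Fintype β]
    (M : Matrix α β ℝ) (w : EuclideanSpace ℝ β) (v : EuclideanSpace ℝ α) :
    inner ℝ w (mv Mᵀ v) = inner ℝ (mv M w) v := by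
  simp only [aux_inner, mv]
  rw [dotProduct_mulVec, vecMul_transpose]

/-- quadratics with negative value at 0 -/
theorem aux_quad (a b c : ℝ) (ha : a < 0) :
    ∃ γbar : ℝ, 0 < γbar ∧ γbar ≤ 1 ∧ ∀ γ : ℝ, 0 < γ → γ < γbar → a + b * γ + c * γ ^ 2 < 0 := by
  refine ⟨min 1 (-a / (|b| + |c| + 1)), ?_, min_le_left _ _, ?_⟩
  · have : 0 < -a / (|b| + |c| + 1) := by
      apply div_pos (by linarith); positivity
    exact lt_min one_pos this
  · intro γ h0 h1
    have h2 := lt_of_lt_of_le h1 (min_le_left _ _)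
    have h3 := lt_of_lt_of_le h1 (min_le_right _ _)
    rw [lt_div_iff₀ (by positivity)] at h3
    have h4 : b * γ ≤ |b| * γ := by gcongr; exact le_abs_self b
    have h5 : c * γ ^ 2 ≤ |c| * γ := by
      have : γ ^ 2 ≤ γ := by nlinarith
      calc c * γ ^ 2 ≤ |c| * γ ^ 2 := by gcongr; exact le_abs_self c
        _ ≤ _ := by gcongr
    nlinarith

theorem aux_norm_expand {E : Type*} [NormedAddCommGroup E] [InnerProductSpace ℝ E]
    (w a s : E) (c γ : ℝ) :
    ‖w - c • (a + γ • s)‖ ^ 2 = ‖w - c • a‖ ^ 2 + (-2 * c * inner ℝ (w - c • a) s) * γ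
      + (c ^ 2 * ‖s‖ ^ 2) * γ ^ 2 := by
  have : w - c • (a + γ • s) = (w - c • a) - (c * γ) • s := by
    rw [smul_add, mul_smul]; abel
  rw [this, norm_sub_sq_real, norm_smul, inner_smul_right, mul_pow, Real.norm_eq_abs, sq_abs]
  ring

theorem aux_norm_expand2 {E : Type*} [NormedAddCommGroup E] [InnerProductSpace ℝ E]
    (w s : E) (c : ℝ) :
    ‖w + c • s‖ ^ 2 = ‖w‖ ^ 2 + 2 * c * inner ℝ w s + c ^ 2 * ‖s‖ ^ 2 := by
  rw [norm_add_sq_real, norm_smul, inner_smul_right, mul_pow, Real.norm_eq_abs, sq_abs]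
  ring

set_option maxHeartbeats 2000000 in
/-- under `H̄_d ≺ 0`, away from the origin there is a step-size threshold
`γ̄ ∈ (0,1]` so that the Lyapunov function decreases for all `γ ∈ (0, γ̄)`; at the origin the
Lyapunov difference vanishes for every `γ ∈ (0,1]`. -/
theorem discrete_closed_loop_stability
    (nw n m nμ nl : ℕ) (α β ζ σ ρ Δt δ κ τ : ℝ)
    (hα : 0 < α) (hβ : 0 ≤ β) (hζ : 0 < ζ) (hσ : 0 < σ) (hρ : σ ≤ ρ)
    (hΔt : 0 < Δt) (hδ : 0 < δ)
    (hκ : κ = 1 + 2 * α * β) (hτ : τ = (1 + α * β)⁻¹)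
    (f : EuclideanSpace ℝ (Fin nw) → ℝ)
    (f' : EuclideanSpace ℝ (Fin nw) → EuclideanSpace ℝ (Fin nw))
    (hfdiff : ∀ v, HasGradientAt f (f' v) v)
    (hfsc : ConvexOn ℝ Set.univ (fun v => f v - σ / 2 * ‖v‖ ^ 2))
    (hlip : ∀ x y, ‖f' x - f' y‖ ≤ ρ * ‖x - y‖)
    (hf0 : f' 0 = 0)
    (g : EuclideanSpace ℝ (Fin nw) → Fin nμ → ℝ)
    (g' : EuclideanSpace ℝ (Fin nw) → Fin nμ → EuclideanSpace ℝ (Fin nw))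
    (hgdiff : ∀ v i, HasGradientAt (fun u => g u i) (g' v i) v)
    (hgconv : ∀ i, ConvexOn ℝ Set.univ fun v => g v i)
    (hg0 : ∀ i, g 0 i < 0)
    (C : Matrix (Fin nl) (Fin nw) ℝ) (D : Matrix (Fin nl) (Fin n) ℝ)
    (E : Matrix (Fin m) (Fin nw) ℝ)
    (Ad : Matrix (Fin n) (Fin n) ℝ) (Bd : Matrix (Fin n) (Fin m) ℝ)
    (HPd : Matrix (Fin n ⊕ Fin m) (Fin n ⊕ Fin m) ℝ) (hHPdsym : HPd.IsSymm)
    (hHPd11 : (-(HPd.toBlocks₁₁)).PosDef)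
    (PPd : Matrix (Fin n ⊕ Fin m) (Fin n ⊕ Fin m) ℝ) (hPPd : PPd.PosSemidef)
    (hplant : ∀ (x : EuclideanSpace ℝ (Fin n)) (u : EuclideanSpace ℝ (Fin m)),
      (1 / 2) * ‖mv Ad x + mv Bd u‖ ^ 2 - (1 / 2) * ‖x‖ ^ 2 ≤
        Δt * (Sum.elim x u ⬝ᵥ (HPd + Δt • PPd).mulVec (Sum.elim x u)))
    (HbCc : Matrix ((Fin nw ⊕ Fin n) ⊕ Fin nl) ((Fin nw ⊕ Fin n) ⊕ Fin nl) ℝ)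
    (hHbCc : HbCc = Matrix.fromBlocks
      (Matrix.fromBlocks
        (-(σ • (1 : Matrix (Fin nw) (Fin nw) ℝ)) - (τ * κ * β) • (Cᵀ * C))
        (-((τ * κ * β / 2) • (Cᵀ * D)))
        (-((τ * κ * β / 2) • (Dᵀ * C))) 0)
      (Matrix.fromRows (-((τ * α * β) • Cᵀ)) ((τ / 2) • Dᵀ))
      (Matrix.fromCols (-((τ * α * β) • C)) ((τ / 2) • D))
      (-((τ * α) • (1 : Matrix (Fin nl) (Fin nl) ℝ))))
    (X : Matrix (Fin nw) ((Fin nw ⊕ Fin n) ⊕ Fin nl) ℝ)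
    (hX : X = (τ * κ) • (Cᵀ * Matrix.fromCols (Matrix.fromCols (β • C) (β • D))
      (1 : Matrix (Fin nl) (Fin nl) ℝ)))
    (Pb : Matrix ((Fin nw ⊕ Fin n) ⊕ Fin nl) ((Fin nw ⊕ Fin n) ⊕ Fin nl) ℝ)
    (hPb : Pb = (ρ ^ 2 + 2 * ρ * opNorm X) •
      (1 : Matrix ((Fin nw ⊕ Fin n) ⊕ Fin nl) ((Fin nw ⊕ Fin n) ⊕ Fin nl) ℝ) + Xᵀ * X)
    (PbCd : Matrix ((Fin nw ⊕ Fin n) ⊕ Fin nl) ((Fin nw ⊕ Fin n) ⊕ Fin nl) ℝ)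
    (hPbCd : PbCd = (1 / 2 : ℝ) • (Pb + (τ ^ 2) •
      ((Matrix.fromCols (Matrix.fromCols C D)
          (-(α • (1 : Matrix (Fin nl) (Fin nl) ℝ))))ᵀ *
        Matrix.fromCols (Matrix.fromCols C D)
          (-(α • (1 : Matrix (Fin nl) (Fin nl) ℝ))))))
    (Wb : Matrix (Fin n ⊕ Fin m) ((Fin nw ⊕ Fin n) ⊕ Fin nl) ℝ)
    (hWb : Wb = Matrix.fromCols (Matrix.fromBlocks 0 1 E 0) 0)
    (hHbd : (-(HbCc + (ζ * Δt) • PbCd + δ • (Wbᵀ * (HPd + Δt • PPd) * Wb))).PosDef) :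
    ∀ (w : EuclideanSpace ℝ (Fin nw)) (μ : EuclideanSpace ℝ (Fin nμ))
      (lam : EuclideanSpace ℝ (Fin nl)) (x : EuclideanSpace ℝ (Fin n)),
      (∀ i, 0 ≤ μ i) →
      let V : EuclideanSpace ℝ (Fin nw) → EuclideanSpace ℝ (Fin nμ) →
          EuclideanSpace ℝ (Fin nl) → EuclideanSpace ℝ (Fin n) → ℝ :=
        fun w' μ' lam' x' =>
          (1 / 2) * (‖w'‖ ^ 2 + ‖μ'‖ ^ 2 + ‖lam'‖ ^ 2) + δ * ζ * ((1 / 2) * ‖x'‖ ^ 2);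
      let ηb : Fin nμ → ℝ := etaBar (ζ * Δt) (g w) μ;
      let wplus : ℝ → EuclideanSpace ℝ (Fin nw) := fun γ =>
        w - (ζ * Δt) • (f' w + γ • (∑ i, (ηb i * μ i) • g' w i) +
          (τ * κ) • mv Cᵀ (lam + β • (mv C w + mv D x)));
      let Δμf : ℝ → EuclideanSpace ℝ (Fin nμ) := fun γ =>
        (ζ * Δt * γ) • (WithLp.toLp 2 (fun i => ηb i * pplus (g w) μ i) : EuclideanSpace ℝ (Fin nμ));
      let μplus : ℝ → EuclideanSpace ℝ (Fin nμ) := fun γ => μ + Δμf γ;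
      let lamplus : EuclideanSpace ℝ (Fin nl) :=
        lam + (ζ * τ * Δt) • ((-α) • lam + mv C w + mv D x);
      let xplus : EuclideanSpace ℝ (Fin n) := mv Ad x + mv Bd (mv E w);
      (¬(w = 0 ∧ μ = 0 ∧ lam = 0 ∧ x = 0) →
        ∃ γbar : ℝ, 0 < γbar ∧ γbar ≤ 1 ∧ ∀ γ : ℝ, 0 < γ → γ < γbar →
          V (wplus γ) (μplus γ) lamplus xplus - V w μ lam x < 0) ∧
      ((w = 0 ∧ μ = 0 ∧ lam = 0 ∧ x = 0) →
        ∀ γ : ℝ, 0 < γ → γ ≤ 1 →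
          V (wplus γ) (μplus γ) lamplus xplus - V w μ lam x = 0) := by
  intro w μ lam x hμ
  intro V ηb wplus Δμf μplus lamplus xplus
  set c := ζ * Δt with hc
  have hcpos : 0 < c := mul_pos hζ hΔt
  have hρ0 : 0 ≤ ρ := hσ.le.trans hρ
  set S : EuclideanSpace ℝ (Fin nw) := ∑ i, (ηb i * μ i) • g' w i with hS
  set v : EuclideanSpace ℝ (Fin nμ) := WithLp.toLp 2 (fun i => ηb i * pplus (g w) μ i) with hv
  set z : EuclideanSpace ℝ (Fin nw) := (τ * κ) • mv Cᵀ (lam + β • (mv C w + mv D x)) with hz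
  have hw : ∀ γ, wplus γ = w - c • ((f' w + z) + γ • S) := by
    intro γ; simp only [wplus]; congr 2; abel
  have hm : ∀ γ, μplus γ = μ + (c * γ) • v := fun γ => rfl
  have hdiff : ∀ γ, V (wplus γ) (μplus γ) lamplus xplus - V w μ lam x =
      (V (w - c • (f' w + z)) μ lamplus xplus - V w μ lam x)
      + (- c * inner ℝ (w - c • (f' w + z)) S + c * inner ℝ μ v) * γ
      + (c ^ 2 / 2 * (‖S‖ ^ 2 + ‖v‖ ^ 2)) * γ ^ 2 := by
    intro γ
    simp only [V]
    rw [hw, hm, aux_norm_expand, aux_norm_expand2]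
    ring
  by_cases hξ : w = 0 ∧ lam = 0 ∧ x = 0
  · obtain ⟨rfl, rfl, rfl⟩ := hξ
    have hz0 : z = 0 := by simp [hz, mv]
    have hx0 : xplus = 0 := by simp [xplus, mv]
    have hl0 : lamplus = 0 := by simp [lamplus, mv]
    have hd2 : ∀ γ, V (wplus γ) (μplus γ) lamplus xplus - V 0 μ 0 0 =
        γ * (c * inner ℝ μ v + (c ^ 2 / 2 * (‖S‖ ^ 2 + ‖v‖ ^ 2)) * γ + 0 * γ ^ 2) := by
      intro γ
      rw [hdiff, hz0, hx0, hl0, hf0]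
      simp
      ring
    constructor
    · intro hne
      have hμ0 : μ ≠ 0 := fun h => hne ⟨rfl, h, rfl, rfl⟩
      have hinner : inner ℝ μ v < 0 := by
        rw [aux_inner]
        have hterm : ∀ i, 0 < μ i → μ i * (ηb i * pplus (g 0) μ i) < 0 := by
          intro i hi
          have hp : pplus (g 0) μ i = g 0 i := by simp [pplus, hi]
          have hη : 0 < ηb i := by
            simp only [ηb, etaBar]
            split_ifs
            · exact one_pos
            · rw [hp]
              exact div_pos_of_neg_of_neg (by linarith) (mul_neg_of_pos_of_neg hcpos (hg0 i))
          rw [hp]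
          exact mul_neg_of_pos_of_neg hi (mul_neg_of_pos_of_neg hη (hg0 i))
        have : ∃ i, 0 < μ i := by
          by_contra hcon
          push Not at hcon
          apply hμ0
          ext i
          exact le_antisymm (hcon i) (hμ i)
        obtain ⟨i, hi⟩ := this
        apply Finset.sum_neg' 
        · intro j _
          rcases (hμ j).eq_or_lt with h | h
          · simp [← h]
          · exact (hterm j h).le
        · exact ⟨i, Finset.mem_univ i, hterm i hi⟩
      obtain ⟨γb, h1, h2, h3⟩ := aux_quad (c * inner ℝ μ v) (c ^ 2 / 2 * (‖S‖ ^ 2 + ‖v‖ ^ 2)) 0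
        (mul_neg_of_pos_of_neg hcpos hinner)
      refine ⟨γb, h1, h2, fun γ hγ hγ' => ?_⟩
      rw [hd2]
      exact mul_neg_of_pos_of_neg hγ (h3 γ hγ hγ')
    · rintro ⟨-, rfl, -, -⟩ γ _ _
      have hS0 : S = 0 := by simp [hS]
      have hv0 : v = 0 := by
        ext i
        simp [hv, pplus, (hg0 i).le]
      rw [hd2, hS0, hv0]
      simp
  · refine ⟨fun _ => ?_, fun h => absurd ⟨h.1, h.2.2.1, h.2.2.2⟩ hξ⟩
    have key : V (w - c • (f' w + z)) μ lamplus xplus - V w μ lam x < 0 := by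
      set ξ : EuclideanSpace ℝ ((Fin nw ⊕ Fin n) ⊕ Fin nl) :=
        WithLp.toLp 2 (Sum.elim (Sum.elim w x) lam) with hξdef
      have hξ0 : ξ.ofLp ≠ 0 := by
        intro h
        apply hξ
        refine ⟨?_, ?_, ?_⟩
        · ext i; simpa [hξdef] using congrFun h (Sum.inl (Sum.inl i))
        · ext i; simpa [hξdef] using congrFun h (Sum.inr i)
        · ext i; simpa [hξdef] using congrFun h (Sum.inl (Sum.inr i))
      have hQ := hHbd.dotProduct_mulVec_pos hξ0
      have hXz : mv X ξ = z := by
        rw [hX, hz]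
        simp only [mv, hξdef]
        ext i
        simp [Matrix.smul_mulVec, ← Matrix.mulVec_mulVec, fromCols_mulVec, Matrix.mulVec_add, Matrix.mulVec_smul]
        ring
      have hnξ : ‖ξ‖ ^ 2 = ‖w‖ ^ 2 + ‖x‖ ^ 2 + ‖lam‖ ^ 2 := by
        simp [aux_normsq, hξdef]
      have hwξ : ‖w‖ ≤ ‖ξ‖ := by
        apply le_of_sq_le_sq _ (norm_nonneg _)
        rw [hnξ]; nlinarith [sq_nonneg ‖x‖, sq_nonneg ‖lam‖]
      set p := mv C w with hp
      set q := mv D x with hq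
      set r := (-α) • lam + p + q with hr
      have hB : ξ.ofLp ⬝ᵥ HbCc *ᵥ ξ.ofLp = - σ * ‖w‖ ^ 2 - τ * κ * β * ‖p‖ ^ 2
          - τ * κ * β * inner ℝ p q - 2 * (τ * α * β) * inner ℝ p lam + τ * inner ℝ q lam
          - τ * α * ‖lam‖ ^ 2 := by
        rw [hHbCc]
        simp only [hξdef]
        rw [aux_HbCc]
        simp only [aux_normsq, aux_inner, hp, hq, mv]
      have hP : ξ.ofLp ⬝ᵥ PbCd *ᵥ ξ.ofLp = 1 / 2 * ((ρ ^ 2 + 2 * ρ * opNorm X) * ‖ξ‖ ^ 2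
          + ‖z‖ ^ 2 + τ ^ 2 * ‖r‖ ^ 2) := by
        have hr' : r.ofLp = Matrix.fromCols (Matrix.fromCols C D)
          (-(α • (1 : Matrix (Fin nl) (Fin nl) ℝ))) *ᵥ ξ.ofLp := by
          simp [hr, hp, hq, mv, hξdef, fromCols_mulVec, Matrix.neg_mulVec, Matrix.smul_mulVec]
          abel
        rw [hPbCd, hPb, aux_normsq r, hr', ← hXz, aux_normsq (mv X ξ), aux_normsq ξ]
        simp only [Matrix.smul_mulVec, Matrix.add_mulVec, dotProduct_smul, dotProduct_add, aux_gram, mv,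
          Matrix.one_mulVec, smul_eq_mul]
      have hW : ξ.ofLp ⬝ᵥ (Wbᵀ * (HPd + Δt • PPd) * Wb) *ᵥ ξ.ofLp =
          Sum.elim x (mv E w) ⬝ᵥ (HPd + Δt • PPd).mulVec (Sum.elim x (mv E w)) := by
        have : Wb *ᵥ ξ.ofLp = Sum.elim x (mv E w) := by
          rw [hWb]
          simp [hξdef, mv, fromCols_mulVec, fromBlocks_mulVec]
        rw [← Matrix.mulVec_mulVec, ← Matrix.mulVec_mulVec, dotProduct_mulVec, vecMul_transpose, this]
      have hpl := hplant x (mv E w)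
      rw [← hW] at hpl
      rw [Matrix.neg_mulVec, dotProduct_neg, Matrix.add_mulVec, Matrix.add_mulVec, dotProduct_add,
        dotProduct_add, Matrix.smul_mulVec, Matrix.smul_mulVec, dotProduct_smul, dotProduct_smul,
        star_trivial, hB, hP] at hQ
      set Q := ξ.ofLp ⬝ᵥ (Wbᵀ * (HPd + Δt • PPd) * Wb) *ᵥ ξ.ofLp
      simp only [smul_eq_mul] at hQ
      have hmono := aux_mono f f' σ hfdiff hfsc hf0 w
      have hfn : ‖f' w‖ ≤ ρ * ‖ξ‖ := by
        have := hlip w 0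
        rw [hf0, sub_zero, sub_zero] at this
        exact this.trans (by gcongr)
      have hzn : ‖z‖ ≤ opNorm X * ‖ξ‖ := hXz ▸ aux_opNorm X ξ
      have hfz : ‖f' w + z‖ ^ 2 ≤ (ρ ^ 2 + 2 * ρ * opNorm X) * ‖ξ‖ ^ 2 + ‖z‖ ^ 2 := by
        rw [norm_add_sq_real]
        have h1 := real_inner_le_norm (f' w) z
        have h2 : ‖f' w‖ * ‖z‖ ≤ (ρ * ‖ξ‖) * (opNorm X * ‖ξ‖) :=
          mul_le_mul hfn hzn (norm_nonneg _) (by positivity)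
        have h3 : ‖f' w‖ ^ 2 ≤ (ρ * ‖ξ‖) ^ 2 := by gcongr
        linarith [h1, h2, h3]
      have hwz : inner ℝ w z = τ * κ * (inner ℝ p lam + β * (‖p‖ ^ 2 + inner ℝ p q)) := by
        rw [hz, inner_smul_right, aux_adj, inner_add_right, inner_smul_right, inner_add_right,
          real_inner_self_eq_norm_sq]
      have hlr : inner ℝ lam r = -α * ‖lam‖ ^ 2 + inner ℝ p lam + inner ℝ q lam := by
        rw [hr, inner_add_right, inner_add_right, inner_smul_right, real_inner_self_eq_norm_sq,
          real_inner_comm lam p, real_inner_comm lam q]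
      have hlam : ‖lamplus‖ ^ 2 = ‖lam‖ ^ 2 + 2 * (c * τ) * inner ℝ lam r + (c * τ) ^ 2 * ‖r‖ ^ 2 := by
        rw [← aux_norm_expand2]
        simp only [lamplus, hc]
        rw [show ζ * τ * Δt = ζ * Δt * τ by ring]
      have hwn : ‖w - c • (f' w + z)‖ ^ 2 = ‖w‖ ^ 2 - 2 * c * (inner ℝ w (f' w) + inner ℝ w z)
          + c ^ 2 * ‖f' w + z‖ ^ 2 := by
        rw [norm_sub_sq_real, norm_smul, inner_smul_right, mul_pow, Real.norm_eq_abs, sq_abs,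
          inner_add_right]
        ring
      simp only [V]
      rw [hlam, hwn, hwz, hlr]
      have hpl2 : δ * ζ * (1 / 2 * ‖xplus‖ ^ 2 - 1 / 2 * ‖x‖ ^ 2) ≤ δ * ζ * (Δt * Q) :=
        mul_le_mul_of_nonneg_left hpl (by positivity)
      have e1 : c * (σ * ‖w‖ ^ 2) ≤ c * inner ℝ w (f' w) := mul_le_mul_of_nonneg_left hmono hcpos.le
      have e2 := mul_le_mul_of_nonneg_left hfz (by positivity : 0 ≤ c ^ 2 / 2)
      have e3 := mul_pos hcpos hQ
      have e4 : δ * ζ * (Δt * Q) = c * (δ * Q) := by rw [hc]; ring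
      rw [e4] at hpl2
      have e5 : κ = 1 + 2 * α * β := hκ
      rw [e5] at e3 ⊢
      linarith
    obtain ⟨γb, h1, h2, h3⟩ := aux_quad _ (- c * inner ℝ (w - c • (f' w + z)) S + c * inner ℝ μ v)
      (c ^ 2 / 2 * (‖S‖ ^ 2 + ‖v‖ ^ 2)) key
    refine ⟨γb, h1, h2, fun γ hγ hγ' => ?_⟩
    rw [hdiff]
    exact h3 γ hγ hγ'
end

section
/- Let ζ > 0, Δt > 0, γ ∈ (0, 1], and let g : ℝ^{n_w} → ℝ^{n_μ}. Suppose μ ∈ ℝ^{n_μ} with μ ≥ 0 componentwise and w ∈ ℝ^{n_w} satisfy the equilibrium condition η∘[g(w)]_μ^+ = 0, where η := γη̄ and η̄ is the step-size base vector. Then g(w) ≤ 0 componentwise. -/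
open Matrix

local notation "⟪" x ", " y "⟫" => @inner ℝ _ _ x y

/-- if `η∘[g(w)]_μ^+ = 0` with `η = γη̄`, then `g(w) ≤ 0` componentwise. -/
theorem equilibrium_satisfies_inequality_constraints
    (nw nμ : ℕ) (ζ Δt γ : ℝ) (hζ : 0 < ζ) (hΔt : 0 < Δt) (hγ0 : 0 < γ) (hγ1 : γ ≤ 1)
    (g : EuclideanSpace ℝ (Fin nw) → Fin nμ → ℝ)
    (w : EuclideanSpace ℝ (Fin nw)) (μ : EuclideanSpace ℝ (Fin nμ)) (hμ : ∀ i, 0 ≤ μ i)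
    (heq : ∀ i, γ * etaBar (ζ * Δt) (g w) μ i * pplus (g w) μ i = 0) :
    ∀ i, g w i ≤ 0 := by
  intro i
  by_contra h
  have h : 0 < g w i := not_le.mp h
  have hp : pplus (g w) μ i = g w i := by
    unfold pplus
    split_ifs
    · rfl
    · exact max_eq_right h.le
  have he : etaBar (ζ * Δt) (g w) μ i = 1 := by
    unfold etaBar
    rw [hp]
    exact if_pos (add_nonneg (hμ i) (mul_pos (mul_pos hζ hΔt) h).le)
  have h2 := heq i
  rw [he, hp, mul_one] at h2
  exact (mul_pos hγ0 h).ne' h2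
end

section
/- Let ζ > 0, Δt > 0, γ ∈ (0, 1], g : ℝ^{n_w} → ℝ^{n_μ}, w ∈ ℝ^{n_w}, and μ ∈ ℝ^{n_μ} with μ ≥ 0 componentwise. Let η̄ be the step-size base vector and η := γη̄. Then for every index i: η_i ≥ 0, with η_i > 0 whenever μ_i > 0; and the dual update preserves nonnegativity: μ_i + ζΔt η_i ([g(w)]_μ^+)_i ≥ 0. -/
open Matrix

local notation "⟪" x ", " y "⟫" => @inner ℝ _ _ x y

/-- the step size `η = γη̄` is nonnegative, positive where `μ_i > 0`, and the
dual update preserves nonnegativity: `μ_i + ζΔt η_i ([g(w)]_μ^+)_i ≥ 0`. -/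
theorem step_size_nonneg_and_dual_update_nonneg
    (nw nμ : ℕ) (ζ Δt γ : ℝ) (hζ : 0 < ζ) (hΔt : 0 < Δt) (hγ0 : 0 < γ) (hγ1 : γ ≤ 1)
    (g : EuclideanSpace ℝ (Fin nw) → Fin nμ → ℝ)
    (w : EuclideanSpace ℝ (Fin nw)) (μ : EuclideanSpace ℝ (Fin nμ)) (hμ : ∀ i, 0 ≤ μ i) :
    ∀ i, 0 ≤ γ * etaBar (ζ * Δt) (g w) μ i ∧
      (0 < μ i → 0 < γ * etaBar (ζ * Δt) (g w) μ i) ∧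
      0 ≤ μ i + ζ * Δt * (γ * etaBar (ζ * Δt) (g w) μ i) * pplus (g w) μ i := by
  intro i
  have hm := hμ i
  have hc : 0 < ζ * Δt := mul_pos hζ hΔt
  have he : etaBar (ζ * Δt) (g w) μ i = if 0 ≤ μ i + ζ * Δt * pplus (g w) μ i then 1
      else -(μ i) / (ζ * Δt * pplus (g w) μ i) := rfl
  rw [he]
  generalize pplus (g w) μ i = p at *
  generalize μ i = m at *
  generalize ζ * Δt = c at *
  split_ifs with h
  · refine ⟨by linarith, fun _ => by linarith, ?_⟩
    have : m + c * (γ * 1) * p = (1 - γ) * m + γ * (m + c * p) := by ring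
    rw [this]
    have h1 : 0 ≤ 1 - γ := by linarith
    positivity
  · have hn : c * p < 0 := by linarith
    refine ⟨mul_nonneg hγ0.le (div_nonneg_of_nonpos (by linarith) hn.le),
      fun h0 => mul_pos hγ0 (div_pos_of_neg_of_neg (by linarith) hn), ?_⟩
    have h2 : -m / (c * p) * (c * p) = -m := div_mul_cancel₀ _ hn.ne
    have : m + c * (γ * (-m / (c * p))) * p = m + γ * (-m / (c * p) * (c * p)) := by ring
    rw [this, h2]
    nlinarith
end
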